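/- Let H : ℝ³ → ℝ be smooth with H(p) > 0 for every p. Write points of ℝ³ as p = (z, x₁, x₂) and define the 1-form α on ℝ³ by α(p)(v) = H(p) · (v_z + x₁ v_{x₂}) for v = (v_z, v_{x₁}, v_{x₂}) ∈ ℝ³ (that is, α = H (dz + x₁ dx₂)). Define the vector field R(p) = H(p)^{−2} · ( H(p) + x₁ ∂_{x₁}H(p), ∂_{x₂}H(p) − x₁ ∂_z H(p), −∂_{x₁}H(p) ). Then for every p ∈ ℝ³: (i) α(p)(R(p)) = 1; (ii) dα(p)(R(p), v) = 0 for every v ∈ ℝ³; (iii) DH(p)(R(p)) = H(p)^{−1} ∂_z H(p). -/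

import Mathlib

theorem stmt5 (H : ℝ × ℝ × ℝ → ℝ) (hH : ContDiff ℝ (⊤ : ℕ∞) H) (hpos : ∀ p, 0 < H p)
    (α : ℝ × ℝ × ℝ → (ℝ × ℝ × ℝ →L[ℝ] ℝ))
    (hα : ∀ p v : ℝ × ℝ × ℝ, α p v = H p * (v.1 + p.2.1 * v.2.2))
    (R : ℝ × ℝ × ℝ → ℝ × ℝ × ℝ)
    (hR : ∀ p : ℝ × ℝ × ℝ,
      R p = ((H p) ^ 2)⁻¹ •
        ((H p + p.2.1 * fderiv ℝ H p (0, 1, 0),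
          fderiv ℝ H p (0, 0, 1) - p.2.1 * fderiv ℝ H p (1, 0, 0),
          -fderiv ℝ H p (0, 1, 0)) : ℝ × ℝ × ℝ)) :
    ∀ p : ℝ × ℝ × ℝ,
      α p (R p) = 1 ∧
      (∀ v : ℝ × ℝ × ℝ, fderiv ℝ α p (R p) v - fderiv ℝ α p v (R p) = 0) ∧
      fderiv ℝ H p (R p) = (H p)⁻¹ * fderiv ℝ H p (1, 0, 0) := by
  intro p
  have hne : H p ≠ 0 := (hpos p).ne'
  have hHd : HasFDerivAt H (fderiv ℝ H p) p :=
    (hH.differentiable (by simp) p).hasFDerivAt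
  have hdec : ∀ v : ℝ × ℝ × ℝ, fderiv ℝ H p v =
      v.1 * fderiv ℝ H p (1, 0, 0) + v.2.1 * fderiv ℝ H p (0, 1, 0)
        + v.2.2 * fderiv ℝ H p (0, 0, 1) := by
    intro v
    have h : v = v.1 • ((1, 0, 0) : ℝ × ℝ × ℝ) + v.2.1 • ((0, 1, 0) : ℝ × ℝ × ℝ)
        + v.2.2 • ((0, 0, 1) : ℝ × ℝ × ℝ) := by
      ext <;> simp
    conv_lhs => rw [h]
    simp only [map_add, map_smul, smul_eq_mul]
  let dz : ℝ × ℝ × ℝ →L[ℝ] ℝ := ContinuousLinearMap.fst ℝ ℝ (ℝ × ℝ)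
  let d1 : ℝ × ℝ × ℝ →L[ℝ] ℝ :=
    (ContinuousLinearMap.fst ℝ ℝ ℝ).comp (ContinuousLinearMap.snd ℝ ℝ (ℝ × ℝ))
  let d2 : ℝ × ℝ × ℝ →L[ℝ] ℝ :=
    (ContinuousLinearMap.snd ℝ ℝ ℝ).comp (ContinuousLinearMap.snd ℝ ℝ (ℝ × ℝ))
  have hαeq : α = fun q => H q • (dz + d1 q • d2) := by
    funext q
    refine ContinuousLinearMap.ext fun v => ?_
    rw [hα]
    simp [dz, d1, d2]
    ring
  have hαd := hHd.smul ((d1.hasFDerivAt (x := p)).smul_const d2 |>.const_add dz)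
  have hfd : ∀ u v : ℝ × ℝ × ℝ, fderiv ℝ α p u v =
      H p * (u.2.1 * v.2.2) + fderiv ℝ H p u * (v.1 + p.2.1 * v.2.2) := by
    intro u v
    have h2 : fderiv ℝ α p =
        H p • d1.smulRight d2 + (fderiv ℝ H p).smulRight (dz + d1 p • d2) := by
      rw [hαeq]
      exact hαd.fderiv
    rw [h2]
    simp [dz, d1, d2]
    ring
  refine ⟨?_, ?_, ?_⟩
  · rw [hα, hR]
    simp only [Prod.smul_mk, smul_eq_mul]
    field_simp
    ring
  · intro v
    rw [hfd, hfd, hdec (R p), hdec v, hR]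
    simp only [Prod.smul_mk, smul_eq_mul]
    field_simp
    ring
  · rw [hdec (R p), hR]
    simp only [Prod.smul_mk, smul_eq_mul]
    field_simp
    ring
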